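/- (Control-effect simplification underlying the derived rule D-AbortingWhile.) Let Q be a laxly iterable effect quantale, q_c, q_e ∈ Q, and let C_c, C_e be sets of control effects over Q; put q_p := (q_e ▷ q_c)*. Then C_c ∪ q_c ▷ (C_e ∪ (q_e ▷ C_c) ∪ ((q_e ▷ q_c) ▷ ((q_p ▷ C_e) ∪ ((q_p ▷ q_e) ▷ C_c)))) ⊑ C_c ∪ q_c ▷ ((q_e ▷ C_c) ∪ (q_p ▷ C_e) ∪ ((q_p ▷ q_e) ▷ C_c)) with respect to the direct order on sets of control effects, where q ▷ C denotes the pointwise left accumulation {q ▷ c | c ∈ C}. -/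

import Mathlib

/-!
Write `x = q_e ▷ q_c` and `q_p = x*`. Left accumulation is an action of the monoid `(Q, ▷, I)` on
control effects (`acc_unit`, `acc_acc`) and is monotone in both arguments (`acc_mono_left`,
`acc_mono_right`). So the inclusion reduces to two facts about the iterate: `I ⊑ q_p`, which
absorbs `C_e` into `q_p ▷ C_e`, and `x ▷ q_p ⊑ q_p ▷ q_p ⊑ q_p`, which absorbs one extra loop
iteration in front of `q_p ▷ C_e` and `(q_p ▷ q_e) ▷ C_c`. All remaining parts of the left-hand
side occur verbatim on the right.
-/

/-- An effect quantale: a join-semilattice-ordered monoid with nilpotent top. -/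
structure EffectQuantale (E : Type*) where
  join : E → E → E
  top : E
  seq : E → E → E
  unit : E
  join_comm : ∀ x y, join x y = join y x
  join_assoc : ∀ x y z, join (join x y) z = join x (join y z)
  join_idem : ∀ x, join x x = x
  join_top : ∀ x, join x top = top
  seq_assoc : ∀ x y z, seq (seq x y) z = seq x (seq y z)
  unit_seq : ∀ x, seq unit x = x
  seq_unit : ∀ x, seq x unit = x
  top_seq : ∀ x, seq top x = top
  seq_top : ∀ x, seq x top = top
  seq_join_left : ∀ a b c, seq a (join b c) = join (seq a b) (seq a c)
  seq_join_right : ∀ a b c, seq (join a b) c = join (seq a c) (seq b c)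

/-- The partial order induced by the join: `x ⊑ y` iff `x ⊔ y = y`. -/
def EffectQuantale.le {E : Type*} (Q : EffectQuantale E) (x y : E) : Prop :=
  Q.join x y = y

/-- A laxly iterable effect quantale: for every `x`, the set of subidempotent
elements above both `x` and the unit has a least element `star x`. -/
structure IterableEffectQuantale (E : Type*) extends EffectQuantale E where
  star : E → E
  star_subidem : ∀ x, toEffectQuantale.le (seq (star x) (star x)) (star x)
  star_extensive : ∀ x, toEffectQuantale.le x (star x)
  star_unit_le : ∀ x, toEffectQuantale.le unit (star x)
  star_least : ∀ x s, toEffectQuantale.le (seq s s) s → toEffectQuantale.le x s →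
    toEffectQuantale.le unit s → toEffectQuantale.le (star x) s

/-- Control effects over an effect quantale carrier `E`, prompt tags `L`,
and type labels `T`. -/
inductive ControlEffect (E L T : Type*) where
  | replace : L → E → T → ControlEffect E L T
  | abort : L → E → T → ControlEffect E L T
  | block : ControlEffect E L T → L → ControlEffect E L T

/-- Left accumulation of an underlying effect on a control effect. -/
def ControlEffect.acc {E L T : Type*} (Q : EffectQuantale E) (q : E) :
    ControlEffect E L T → ControlEffect E L T
  | .replace l q' t => .replace l (Q.seq q q') t
  | .abort l q' t => .abort l (Q.seq q q') t
  | .block c l => .block (ControlEffect.acc Q q c) l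

/-- The elementwise order on control effects. -/
inductive ControlEffect.CLe {E L T : Type*} (Q : EffectQuantale E) :
    ControlEffect E L T → ControlEffect E L T → Prop where
  | replace {l : L} {q q' : E} {t : T} : Q.le q q' →
      ControlEffect.CLe Q (.replace l q t) (.replace l q' t)
  | abort {l : L} {q q' : E} {t : T} : Q.le q q' →
      ControlEffect.CLe Q (.abort l q t) (.abort l q' t)
  | block {c c' : ControlEffect E L T} {l : L} : ControlEffect.CLe Q c c' →
      ControlEffect.CLe Q (.block c l) (.block c' l)

/-- The direct order on sets of control effects. -/
def ControlEffect.SLe {E L T : Type*} (Q : EffectQuantale E)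
    (C₁ C₂ : Set (ControlEffect E L T)) : Prop :=
  ∀ c ∈ C₁, ∃ c' ∈ C₂, ControlEffect.CLe Q c c'

/-- Pointwise lifting of left accumulation to sets of control effects. -/
def ControlEffect.accSet {E L T : Type*} (Q : EffectQuantale E) (q : E)
    (C : Set (ControlEffect E L T)) : Set (ControlEffect E L T) :=
  (ControlEffect.acc Q q) '' C

/-- The defined fragment of continuation effects: a set of control effects
paired with a (defined) underlying effect. -/
abbrev CEff (E L T : Type*) := Set (ControlEffect E L T) × E

/-- Sequencing on the defined fragment of continuation effects. -/
def CEff.seq {E L T : Type*} (Q : EffectQuantale E) (x y : CEff E L T) : CEff E L T :=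
  (x.1 ∪ ControlEffect.accSet Q x.2 y.1, Q.seq x.2 y.2)

/-- Join on the defined fragment of continuation effects. -/
def CEff.join {E L T : Type*} (Q : EffectQuantale E) (x y : CEff E L T) : CEff E L T :=
  (x.1 ∪ y.1, Q.join x.2 y.2)

/-- The direct (componentwise) order on the defined fragment. -/
def CEff.le {E L T : Type*} (Q : EffectQuantale E) (x y : CEff E L T) : Prop :=
  ControlEffect.SLe Q x.1 y.1 ∧ Q.le x.2 y.2

namespace EffectQuantale

variable {E : Type*} (Q : EffectQuantale E)

theorem le_trans {x y z : E} (hxy : Q.le x y) (hyz : Q.le y z) : Q.le x z := by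
  unfold EffectQuantale.le at *
  rw [← hyz, ← Q.join_assoc, hxy]

theorem seq_mono_left {a b : E} (c : E) (h : Q.le a b) : Q.le (Q.seq a c) (Q.seq b c) := by
  unfold EffectQuantale.le at *
  rw [← Q.seq_join_right, h]

theorem seq_mono_right (a : E) {b c : E} (h : Q.le b c) : Q.le (Q.seq a b) (Q.seq a c) := by
  unfold EffectQuantale.le at *
  rw [← Q.seq_join_left, h]

end EffectQuantale

theorem IterableEffectQuantale.seq_star_le {E : Type*} (Q : IterableEffectQuantale E) (x : E) :
    Q.le (Q.seq x (Q.star x)) (Q.star x) :=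
  Q.le_trans (Q.seq_mono_left _ (Q.star_extensive x)) (Q.star_subidem x)

namespace ControlEffect

variable {E L T : Type*} (Q : EffectQuantale E)

theorem CLe.rfl (c : ControlEffect E L T) : CLe Q c c := by
  induction c with
  | replace l q t => exact .replace (Q.join_idem q)
  | abort l q t => exact .abort (Q.join_idem q)
  | block c l ih => exact .block ih

theorem acc_unit (c : ControlEffect E L T) : acc Q Q.unit c = c := by
  induction c with
  | replace l q t => simp only [acc, Q.unit_seq]
  | abort l q t => simp only [acc, Q.unit_seq]
  | block c l ih => simp only [acc, ih]

theorem acc_acc (a b : E) (c : ControlEffect E L T) :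
    acc Q a (acc Q b c) = acc Q (Q.seq a b) c := by
  induction c with
  | replace l q t => simp only [acc, Q.seq_assoc]
  | abort l q t => simp only [acc, Q.seq_assoc]
  | block c l ih => simp only [acc, ih]

theorem acc_mono_left {a b : E} (h : Q.le a b) (c : ControlEffect E L T) :
    CLe Q (acc Q a c) (acc Q b c) := by
  induction c with
  | replace l q t => exact .replace (Q.seq_mono_left q h)
  | abort l q t => exact .abort (Q.seq_mono_left q h)
  | block c l ih => exact .block ih

theorem acc_mono_right (a : E) {c d : ControlEffect E L T} (h : CLe Q c d) :
    CLe Q (acc Q a c) (acc Q a d) := by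
  induction h with
  | replace h => exact .replace (Q.seq_mono_right a h)
  | abort h => exact .abort (Q.seq_mono_right a h)
  | block _ ih => exact .block ih

end ControlEffect

/-- Control-effect simplification underlying the derived rule D-AbortingWhile,
where `q_p = (q_e ▷ q_c)*` and `q ▷ C` denotes pointwise left accumulation. -/
theorem dAbortingWhile_simplification {E L T : Type*} (Q : IterableEffectQuantale E)
    (qc qe : E) (Cc Ce : Set (ControlEffect E L T)) :
    ∀ qp : E, qp = Q.star (Q.toEffectQuantale.seq qe qc) →
      ControlEffect.SLe Q.toEffectQuantale
        (Cc ∪ ControlEffect.accSet Q.toEffectQuantale qc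
          (Ce ∪ ControlEffect.accSet Q.toEffectQuantale qe Cc ∪
            ControlEffect.accSet Q.toEffectQuantale (Q.toEffectQuantale.seq qe qc)
              (ControlEffect.accSet Q.toEffectQuantale qp Ce ∪
                ControlEffect.accSet Q.toEffectQuantale
                  (Q.toEffectQuantale.seq qp qe) Cc)))
        (Cc ∪ ControlEffect.accSet Q.toEffectQuantale qc
          (ControlEffect.accSet Q.toEffectQuantale qe Cc ∪
            ControlEffect.accSet Q.toEffectQuantale qp Ce ∪
            ControlEffect.accSet Q.toEffectQuantale
              (Q.toEffectQuantale.seq qp qe) Cc)) := by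
  intro qp hqp
  have hunit : Q.le Q.unit qp := hqp ▸ Q.star_unit_le _
  have hstep : Q.le (Q.seq (Q.seq qe qc) qp) qp := hqp ▸ Q.seq_star_le _
  rintro c (hc | ⟨d, hd, rfl⟩)
  · exact ⟨c, Or.inl hc, ControlEffect.CLe.rfl _ c⟩
  -- By monotonicity of `acc qc`, it suffices to dominate the argument `d` of the accumulation.
  suffices h : ∃ d' ∈ ControlEffect.accSet Q.toEffectQuantale qe Cc ∪
      ControlEffect.accSet Q.toEffectQuantale qp Ce ∪
      ControlEffect.accSet Q.toEffectQuantale (Q.toEffectQuantale.seq qp qe) Cc,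
      ControlEffect.CLe Q.toEffectQuantale d d' by
    obtain ⟨d', hd', hle⟩ := h
    exact ⟨_, Or.inr ⟨d', hd', rfl⟩, ControlEffect.acc_mono_right _ qc hle⟩
  rcases hd with (hd | hd) | ⟨_, ⟨e, he, rfl⟩ | ⟨e, he, rfl⟩, rfl⟩
  · refine ⟨_, Or.inl (Or.inr ⟨d, hd, rfl⟩), ?_⟩
    have h := ControlEffect.acc_mono_left _ hunit d
    rwa [ControlEffect.acc_unit] at h
  · exact ⟨d, Or.inl (Or.inl hd), ControlEffect.CLe.rfl _ d⟩
  · refine ⟨_, Or.inl (Or.inr ⟨e, he, rfl⟩), ?_⟩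
    rw [ControlEffect.acc_acc]
    exact ControlEffect.acc_mono_left _ hstep e
  · refine ⟨_, Or.inr ⟨e, he, rfl⟩, ?_⟩
    rw [ControlEffect.acc_acc, ← Q.seq_assoc]
    exact ControlEffect.acc_mono_left _ (Q.seq_mono_left qe hstep) e
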